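/- Let X be a compact topological space, Y an upward directed partially ordered set, and f : X × Y → ℝ ∪ {−∞, +∞} a function such that (i) for every y ∈ Y the map x ↦ f(x,y) is upper semicontinuous, and (ii) for every x ∈ X the map y ↦ f(x,y) is monotone decreasing. Then sup_{x∈X} inf_{y∈Y} f(x,y) = inf_{y∈Y} sup_{x∈X} f(x,y), and both suprema are attained (i.e., may be replaced by maxima). -/

import Mathlib

/-!
Put `c = ⨅ i, ⨆ x, f x i`. Each function `x ↦ f x i` attains its supremum, which is at least `c`, so
the superlevel sets `{x | c ≤ f x i}` are nonempty. They are closed by semicontinuity and directed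
downwards in `i`, so by compactness they have a common point `x₀`. Then `c ≤ ⨅ i, f x₀ i`, the
nontrivial half of the minimax equality, with `x₀` an optimal point.
-/

open Set

section

variable {X ι β : Type*} [TopologicalSpace X] [CompactSpace X] [Nonempty X]

theorem exists_eq_iSup_of_upperSemicontinuous [ConditionallyCompleteLinearOrder β] {g : X → β}
    (hg : UpperSemicontinuous g) : ∃ x, g x = ⨆ x', g x' := by
  obtain ⟨x, -, hx⟩ := (hg.upperSemicontinuousOn univ).exists_isMaxOn univ_nonempty isCompact_univ
  have hgreatest : IsGreatest (range g) (g x) :=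
    ⟨mem_range_self x, forall_mem_range.2 fun x' => hx (mem_univ x')⟩
  exact ⟨x, hgreatest.csSup_eq.symm⟩

theorem exists_forall_le_of_directed_of_upperSemicontinuous [LinearOrder β] {f : X → ι → β} {c : β}
    (husc : ∀ i, UpperSemicontinuous fun x => f x i) (hdir : Directed (· ≥ ·) fun i x => f x i)
    (hc : ∀ i, ∃ x, c ≤ f x i) : ∃ x, ∀ i, c ≤ f x i := by
  cases isEmpty_or_nonempty ι
  · exact ⟨Classical.arbitrary X, isEmptyElim⟩
  have hclosed (i : ι) : IsClosed {x | c ≤ f x i} := (husc i).isClosed_preimage c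
  have hsuperlevel : Directed (· ⊇ ·) fun i => {x | c ≤ f x i} :=
    hdir.mono_comp (g := fun h => {x | c ≤ h x}) _ fun _ _ hle x hx => le_trans hx (hle x)
  obtain ⟨x, hx⟩ := IsCompact.nonempty_iInter_of_directed_nonempty_isCompact_isClosed _
    hsuperlevel hc (fun i => (hclosed i).isCompact) hclosed
  exact ⟨x, mem_iInter.1 hx⟩

theorem exists_iInf_eq_iInf_iSup [CompleteLinearOrder β] {f : X → ι → β}
    (husc : ∀ i, UpperSemicontinuous fun x => f x i) (hdir : Directed (· ≥ ·) fun i x => f x i) :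
    ∃ x₀, ⨅ i, f x₀ i = ⨅ i, ⨆ x, f x i := by
  have hattained (i : ι) : ∃ x, ⨅ j, ⨆ x', f x' j ≤ f x i := by
    obtain ⟨x, hx⟩ := exists_eq_iSup_of_upperSemicontinuous (husc i)
    exact ⟨x, hx ▸ iInf_le _ i⟩
  obtain ⟨x₀, hx₀⟩ := exists_forall_le_of_directed_of_upperSemicontinuous husc hdir hattained
  exact ⟨x₀, le_antisymm (iInf_mono fun i => le_iSup (f · i) x₀) (le_iInf hx₀)⟩

theorem minimax_usc_antitone_general [CompleteLinearOrder β] (f : X → ι → β)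
    (husc : ∀ i, UpperSemicontinuous fun x => f x i) (hdir : Directed (· ≥ ·) fun i x => f x i) :
    (⨆ x, ⨅ i, f x i) = (⨅ i, ⨆ x, f x i) ∧
    (∃ x₀, ⨅ i, f x₀ i = ⨆ x, ⨅ i, f x i) ∧
    (∀ i, ∃ x₁, f x₁ i = ⨆ x, f x i) := by
  obtain ⟨x₀, hx₀⟩ := exists_iInf_eq_iInf_iSup husc hdir
  have hminimax : (⨆ x, ⨅ i, f x i) = ⨅ i, ⨆ x, f x i :=
    le_antisymm (iSup_iInf_le_iInf_iSup f) (hx₀ ▸ le_iSup (fun x => ⨅ i, f x i) x₀)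
  exact ⟨hminimax, ⟨x₀, hx₀.trans hminimax.symm⟩,
    fun i => exists_eq_iSup_of_upperSemicontinuous (husc i)⟩

end

/-- **Minimax lemma.** Let `X` be a compact topological space, `Y` an upward directed
partially ordered set, and `f : X × Y → ℝ ∪ {−∞, +∞}` such that `x ↦ f x y` is upper
semicontinuous for every `y` and `y ↦ f x y` is monotone decreasing for every `x`.  Then
`sup_x inf_y f x y = inf_y sup_x f x y`, and both suprema are attained. -/
theorem minimax_usc_antitone {X Y : Type*} [TopologicalSpace X] [CompactSpace X]
    [Nonempty X] [PartialOrder Y] [IsDirected Y (· ≤ ·)]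
    (f : X → Y → EReal)
    (husc : ∀ y : Y, UpperSemicontinuous fun x => f x y)
    (hmono : ∀ x : X, Antitone (f x)) :
    ((⨆ x, ⨅ y, f x y) = ⨅ y, ⨆ x, f x y) ∧
    (∃ x₀, (⨅ y, f x₀ y) = ⨆ x, ⨅ y, f x y) ∧
    (∀ y, ∃ x₁, f x₁ y = ⨆ x, f x y) :=
  minimax_usc_antitone_general f husc (Antitone.directed_ge fun _ _ hle x => hmono x hle)
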